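/- arXiv:math/0012158 — 2 statements merged into one kernel-verified Lean document; each statement's English description precedes it below -/
import Mathlib

section
/- Let k be a field of characteristic zero and α a k-automorphism of K₁ = k((t₁)) with α(t₁) = ζt₁ + higher order terms, ζ a primitive n-th root of unity. Then α is conjugate in Aut_k(K₁) to an automorphism β with β(t₁) = ζ t₁ + x t₁^{i} + x²y t₁^{2i−1} for some x, y ∈ k, where i = i_α := v(αⁿ(t₁) − t₁) if αⁿ ≠ id (and if ζ is not a root of unity, to β(t₁) = ζt₁). -/
/-!
By automatic continuity `α` restricts to an endomorphism `A` of `k⟦X⟧`: a series with constant term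
`1` has `m`-th roots for every `m ≥ 1`, so the order of its image is divisible by every `m ≥ 1` and
hence is `0`.

The average `s` of the series `ζ⁻ʲ Aʲ X` over `j < n` satisfies `A s - ζ s = (ζ / n) (Aⁿ X - X)`, so
in the coordinate `s` the map becomes `X ↦ ζX + xXⁱ` modulo `Xⁱ⁺¹`, with `x ≠ 0`. As `A` and `Aⁿ`
commute, comparing leading terms gives `ζⁱ⁻¹ = 1`.

A coordinate `g` with `A g = ζg + xgⁱ + wg²ⁱ⁻¹` is then found by successive approximation. Raising
the precision amounts to a linear equation for the correction to `g`. It can always be solved except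
when its leading term has degree `i` (the resonance); this single obstruction is absorbed in `w`.
-/

open PowerSeries LaurentSeries

section Congruences

variable {R : Type*} [CommRing R]

theorem dvd_sub_trans {d a b c : R} (hab : d ∣ a - b) (hbc : d ∣ b - c) : d ∣ a - c := by
  simpa using dvd_add hab hbc

theorem eq_of_forall_pow_dvd_sub {a x y : R} [IsHausdorff (Ideal.span {a}) R]
    (h : ∀ m, a ^ m ∣ x - y) : x = y := by
  refine sub_eq_zero.mp (IsHausdorff.haus ‹_› _ fun m ↦ ?_)
  simpa [SModEq.zero, Ideal.span_singleton_pow, Ideal.mem_span_singleton] using h m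

theorem exists_limit_of_successive_approximation {a : R} [IsPrecomplete (Ideal.span {a}) R]
    {P : ℕ → R → Prop} {g₀ : R} (h₀ : P 0 g₀)
    (step : ∀ m g, P m g → ∃ g', a ^ m ∣ g' - g ∧ P (m + 1) g') :
    ∃ g, ∀ m, ∃ g', a ^ m ∣ g - g' ∧ P m g' := by
  choose next hnext hP using step
  let u (m : ℕ) : {g // P m g} := Nat.rec ⟨g₀, h₀⟩ (fun m g ↦ ⟨next m g g.2, hP m g g.2⟩) m
  have hu (m : ℕ) : a ^ m ∣ (u (m + 1)).1 - (u m).1 := hnext m (u m).1 (u m).2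
  have cauchy {m l : ℕ} (hml : m ≤ l) : a ^ m ∣ (u l).1 - (u m).1 := by
    induction l, hml using Nat.le_induction with
    | base => simp
    | succ l hml ih => exact dvd_sub_trans ((pow_dvd_pow a hml).trans (hu l)) ih
  obtain ⟨g, hg⟩ := IsPrecomplete.prec ‹IsPrecomplete (Ideal.span {a}) R› (f := fun m ↦ (u m).1)
    fun {m l} hml ↦ by
      simpa [SModEq.sub_mem, Ideal.span_singleton_pow, Ideal.mem_span_singleton, dvd_sub_comm]
        using cauchy hml
  refine ⟨g, fun m ↦ ⟨(u m).1, ?_, (u m).2⟩⟩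
  simpa [SModEq.sub_mem, Ideal.span_singleton_pow, Ideal.mem_span_singleton, dvd_sub_comm]
    using hg m

theorem pow_add_dvd_pow_sub_pow {t f g : R} {d : ℕ} (hf : t ∣ f) (hg : t ∣ g)
    (hfg : t ^ (d + 1) ∣ f - g) (m : ℕ) : t ^ (d + m) ∣ f ^ m - g ^ m := by
  induction m with
  | zero => simp
  | succ m ih =>
    have h₁ : t ^ (d + (m + 1)) ∣ f * (f ^ m - g ^ m) := by
      rw [← add_assoc, pow_succ']
      exact mul_dvd_mul hf ih
    have h₂ : t ^ (d + (m + 1)) ∣ (f - g) * g ^ m := by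
      rw [add_comm m, ← add_assoc, pow_add]
      exact mul_dvd_mul hfg (pow_dvd_pow_of_dvd hg m)
    convert dvd_add h₁ h₂ using 1
    ring

theorem pow_dvd_add_pow_sub_linear {t g u : R} {d : ℕ} (hg : t ∣ g) (hu : t ^ (d + 1) ∣ u)
    (m : ℕ) : t ^ (2 * d + m + 1) ∣ (g + u) ^ (m + 1) - g ^ (m + 1) - (m + 1) * g ^ m * u := by
  obtain ⟨p, rfl⟩ := hg
  obtain ⟨q, rfl⟩ := hu
  obtain ⟨e, he⟩ := Polynomial.powAddExpansion p (t ^ d * q) (m + 1)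
  refine ⟨e * q ^ 2, ?_⟩
  have : (t * p + t ^ (d + 1) * q) ^ (m + 1) = t ^ (m + 1) * (p + t ^ d * q) ^ (m + 1) := by
    rw [← mul_pow]
    ring
  rw [this, he]
  push_cast [Nat.add_sub_cancel]
  ring

theorem X_pow_succ_dvd_sub_coeff_smul {N : ℕ} {f : R⟦X⟧} (hf : X ^ N ∣ f) :
    X ^ (N + 1) ∣ f - coeff N f • X ^ N := by
  rw [X_pow_dvd_iff] at hf ⊢
  intro m hm
  rcases (Nat.lt_succ_iff.mp hm).lt_or_eq with hm | rfl
  · simp [hf m hm, coeff_X_pow, hm.ne]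
  · simp

theorem X_dvd_of_X_sq_dvd_sub {g : R⟦X⟧} (hg : X ^ 2 ∣ g - X) : X ∣ g :=
  (dvd_iff_dvd_of_dvd_sub ((dvd_pow_self X two_ne_zero).trans hg)).mpr dvd_rfl

end Congruences

section Endomorphisms

variable {k : Type*} [Field k]

theorem X_dvd_map_X (A : k⟦X⟧ →ₐ[k] k⟦X⟧) : X ∣ A X := by
  rw [X_dvd_iff]
  by_contra hc
  have hunit : IsUnit (A (X - C (constantCoeff (A X)))) := by
    refine IsUnit.map A (isUnit_iff_constantCoeff.mpr ?_)
    simpa using hc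
  have hA : A (C (constantCoeff (A X))) = C (constantCoeff (A X)) := A.commutes _
  rw [map_sub, hA, isUnit_iff_constantCoeff] at hunit
  simp at hunit

theorem X_pow_dvd_map (A : k⟦X⟧ →ₐ[k] k⟦X⟧) {m : ℕ} {h : k⟦X⟧} (hh : X ^ m ∣ h) :
    X ^ m ∣ A h := by
  refine (pow_dvd_pow_of_dvd (X_dvd_map_X A) m).trans ?_
  simpa using map_dvd A hh

theorem X_pow_dvd_map_sub_self {R : Type*} [CommRing R] {B : R⟦X⟧ →ₐ[R] R⟦X⟧} {N : ℕ}
    (hB : X ^ N ∣ B X - X) (h : R⟦X⟧) : X ^ N ∣ B h - h := by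
  suffices ∀ e ≤ N, ∀ h, X ^ e ∣ B h - h from this N le_rfl h
  intro e
  induction e with
  | zero => simp
  | succ e ih =>
    intro he h
    have hC (c : R) : B (C c) = C c := B.commutes c
    obtain ⟨c, q, rfl⟩ : ∃ c q, h = X * q + C c := ⟨_, _, eq_X_mul_shift_add_const h⟩
    have h₁ : X ^ (e + 1) ∣ (B X - X) * B q := ((pow_dvd_pow X he).trans hB).mul_right _
    have h₂ : X ^ (e + 1) ∣ X * (B q - q) := by
      rw [pow_succ']
      exact mul_dvd_mul_left X (ih (by omega) q)
    convert dvd_add h₁ h₂ using 1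
    rw [map_add, map_mul, hC]
    ring

theorem X_pow_add_dvd_map_sub_self {B : k⟦X⟧ →ₐ[k] k⟦X⟧} {d : ℕ} (hB : X ^ (d + 1) ∣ B X - X)
    {m : ℕ} {h : k⟦X⟧} (hh : X ^ m ∣ h) : X ^ (d + m) ∣ B h - h := by
  obtain ⟨q, rfl⟩ := hh
  have h₁ : X ^ (d + m) ∣ (B X ^ m - X ^ m) * B q :=
    (pow_add_dvd_pow_sub_pow (X_dvd_map_X B) dvd_rfl hB m).mul_right _
  have h₂ : X ^ (d + m) ∣ X ^ m * (B q - q) := by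
    rw [add_comm, pow_add]
    exact mul_dvd_mul_left _ ((pow_dvd_pow X d.le_succ).trans (X_pow_dvd_map_sub_self hB q))
  convert dvd_add h₁ h₂ using 1
  simp only [map_mul, map_pow]
  ring

theorem X_pow_succ_dvd_map_sub_smul {A : k⟦X⟧ →ₐ[k] k⟦X⟧} {ζ : k} (hA : X ^ 2 ∣ A X - ζ • X)
    {m : ℕ} {h : k⟦X⟧} (hh : X ^ m ∣ h) : X ^ (m + 1) ∣ A h - ζ ^ m • h := by
  obtain ⟨q, rfl⟩ := hh
  have hq : X ∣ A q - q := by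
    simpa using X_pow_dvd_map_sub_self (N := 1) (by simpa using X_dvd_map_X A) q
  have h₁ : X ^ (m + 1) ∣ (A X ^ m - (ζ • X) ^ m) * A q := by
    rw [add_comm]
    exact (pow_add_dvd_pow_sub_pow (X_dvd_map_X A) (dvd_smul_of_dvd ζ dvd_rfl) hA m).mul_right _
  have h₂ : X ^ (m + 1) ∣ (ζ • X) ^ m * (A q - q) :=
    mul_dvd_mul (pow_dvd_pow_of_dvd (dvd_smul_of_dvd ζ dvd_rfl) m) hq
  convert dvd_add h₁ h₂ using 1
  simp only [map_mul, map_pow, smul_eq_C_mul, mul_pow]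
  ring

theorem X_sq_dvd_pow_apply_X_sub {A : k⟦X⟧ →ₐ[k] k⟦X⟧} {ζ : k} (hA : X ^ 2 ∣ A X - ζ • X) (j : ℕ) :
    X ^ 2 ∣ (A ^ j) X - ζ ^ j • X := by
  induction j with
  | zero => simp
  | succ j ih =>
    have h₁ : X ^ 2 ∣ A ((A ^ j) X) - ζ • (A ^ j) X := by
      simpa using X_pow_succ_dvd_map_sub_smul hA (m := 1) (by simpa using X_dvd_map_X (A ^ j))
    rw [pow_succ' A, AlgHom.mul_apply, pow_succ' ζ, mul_smul]
    refine dvd_sub_trans h₁ ?_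
    rw [← smul_sub]
    exact dvd_smul_of_dvd ζ ih

theorem exists_map_sub_smul_eq {A : k⟦X⟧ →ₐ[k] k⟦X⟧} {ζ : k} {n : ℕ} (hn : (n : k) ≠ 0)
    (hζ : ζ ^ n = 1) (hA : X ^ 2 ∣ A X - ζ • X) :
    ∃ s, X ^ 2 ∣ s - X ∧ A s - ζ • s = (ζ / n) • ((A ^ n) X - X) := by
  have hn₀ : n ≠ 0 := by
    rintro rfl
    simp at hn
  have hζ₀ : ζ ≠ 0 := (IsUnit.of_pow_eq_one hζ hn₀).ne_zero
  let u (j : ℕ) : k⟦X⟧ := ζ⁻¹ ^ j • (A ^ j) X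
  have hu (j : ℕ) : X ^ 2 ∣ u j - X := by
    have := dvd_smul_of_dvd (ζ⁻¹ ^ j) (X_sq_dvd_pow_apply_X_sub hA j)
    rwa [smul_sub, smul_smul, ← mul_pow, inv_mul_cancel₀ hζ₀, one_pow, one_smul] at this
  have hAu (j : ℕ) : A (u j) = ζ • u (j + 1) := by
    simp only [u, map_smul, pow_succ', AlgHom.mul_apply, mul_smul, smul_inv_smul₀ hζ₀]
  refine ⟨(n : k)⁻¹ • ∑ j ∈ Finset.range n, u j, ?_, ?_⟩
  · have hX : (n : k)⁻¹ • ∑ _ ∈ Finset.range n, (X : k⟦X⟧) = X := by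
      simp [← Nat.cast_smul_eq_nsmul k, smul_smul, hn]
    nth_rw 2 [← hX]
    rw [← smul_sub, ← Finset.sum_sub_distrib]
    exact dvd_smul_of_dvd _ (Finset.dvd_sum fun _ _ ↦ hu _)
  · have hun : u n = (A ^ n) X := by simp [u, hζ]
    have hu₀ : u 0 = X := by simp [u]
    rw [map_smul, map_sum, smul_comm ζ, ← smul_sub, Finset.smul_sum, ← Finset.sum_sub_distrib]
    simp_rw [hAu, ← smul_sub]
    rw [← Finset.smul_sum, Finset.sum_range_sub, hun, hu₀, smul_smul, div_eq_inv_mul]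

theorem pow_succ_eq_self_of_commute {A B : k⟦X⟧ →ₐ[k] k⟦X⟧} (hAB : Commute A B) {ζ : k} {d : ℕ}
    (hA : X ^ 2 ∣ A X - ζ • X) (hB : X ^ (d + 1) ∣ B X - X) (hB' : ¬ X ^ (d + 2) ∣ B X - X) :
    ζ ^ (d + 1) = ζ := by
  have h₁ : X ^ (d + 2) ∣ A (B X - X) - ζ ^ (d + 1) • (B X - X) :=
    X_pow_succ_dvd_map_sub_smul hA hB
  have h₂ : X ^ (d + 2) ∣ A (B X - X) - ζ • (B X - X) := by
    have hABX : A (B X) = B (A X) := DFunLike.congr_fun hAB.eq X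
    convert X_pow_add_dvd_map_sub_self hB hA using 1
    simp only [map_sub, map_smul, hABX, smul_sub]
    ring
  by_contra hζ
  have h₃ : X ^ (d + 2) ∣ (ζ - ζ ^ (d + 1)) • (B X - X) := by
    simpa [sub_smul] using dvd_sub h₁ h₂
  refine hB' ?_
  simpa [smul_smul, sub_ne_zero.mpr (Ne.symm hζ)] using
    dvd_smul_of_dvd (ζ - ζ ^ (d + 1))⁻¹ h₃

end Endomorphisms

section NormalForm

/-- The normal form `ζt + xt^(r+1) + wt^(2r+1)`; in terms of `i = r + 1` the exponents are `i` and
`2i - 1`. -/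
def normalForm {k S : Type*} [Semiring S] [SMul k S] (ζ x w : k) (r : ℕ) (t : S) : S :=
  ζ • t + x • t ^ (r + 1) + w • t ^ (2 * r + 1)

theorem map_normalForm {k S S' : Type*} [CommSemiring k] [Semiring S] [Semiring S']
    [Algebra k S] [Algebra k S'] (A : S →ₐ[k] S') (ζ x w : k) (r : ℕ) (t : S) :
    A (normalForm ζ x w r t) = normalForm ζ x w r (A t) := by
  simp [normalForm]

theorem sub_dvd_normalForm_sub {R S : Type*} [CommSemiring R] [CommRing S] [Algebra R S]
    (ζ x w : R) (r : ℕ) (s t : S) : s - t ∣ normalForm ζ x w r s - normalForm ζ x w r t := by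
  simp only [normalForm, add_sub_add_comm, ← smul_sub]
  exact dvd_add (dvd_add (dvd_smul_of_dvd _ dvd_rfl) (dvd_smul_of_dvd _ (sub_dvd_pow_sub_pow ..)))
    (dvd_smul_of_dvd _ (sub_dvd_pow_sub_pow ..))

theorem X_pow_succ_dvd_sub_smul_X {R : Type*} [CommRing R] {ζ x : R} {r : ℕ} {a : R⟦X⟧}
    (ha : X ^ (r + 2) ∣ a - normalForm ζ x 0 r X) : X ^ (r + 1) ∣ a - ζ • X := by
  refine dvd_sub_trans ((pow_dvd_pow X (r + 1).le_succ).trans ha) ?_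
  simpa [normalForm] using dvd_smul_of_dvd x (dvd_refl (X ^ (r + 1)))

theorem X_pow_dvd_normalForm_add_sub {R : Type*} [CommRing R] {g u : R⟦X⟧} (hg : X ^ 2 ∣ g - X)
    {d : ℕ} (hu : X ^ (d + 1) ∣ u) (ζ x w : R) {r : ℕ} (hr : 1 ≤ r) (hd : 1 ≤ d) :
    X ^ (d + r + 2) ∣ normalForm ζ x w r (g + u) - normalForm ζ x w r g
      - (ζ • u + (((r : R) + 1) * x) • (X ^ r * u)) := by
  have hXg : X ∣ g := X_dvd_of_X_sq_dvd_sub hg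
  have hXu : X ∣ u := (dvd_pow_self X d.succ_ne_zero).trans hu
  have h₁ : X ^ (d + r + 2) ∣ x • ((g + u) ^ (r + 1) - g ^ (r + 1) - (r + 1 : R⟦X⟧) * g ^ r * u) :=
    dvd_smul_of_dvd _ ((pow_dvd_pow X (by omega)).trans (pow_dvd_add_pow_sub_linear hXg hu r))
  have h₂ : X ^ (d + r + 2) ∣ (((r : R) + 1) * x) • ((g ^ r - X ^ r) * u) := by
    have := mul_dvd_mul (pow_add_dvd_pow_sub_pow (d := 1) hXg dvd_rfl hg r) hu
    rw [← pow_add] at this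
    exact dvd_smul_of_dvd _ ((pow_dvd_pow X (by omega)).trans this)
  have h₃ : X ^ (d + r + 2) ∣ w • ((g + u) ^ (2 * r + 1) - g ^ (2 * r + 1)) := by
    have := pow_add_dvd_pow_sub_pow (dvd_add hXg hXu) hXg (by simpa using hu) (2 * r + 1)
    exact dvd_smul_of_dvd _ ((pow_dvd_pow X (by omega)).trans this)
  convert dvd_add (dvd_add h₁ h₂) h₃ using 1
  simp only [normalForm, smul_eq_C_mul, map_mul, map_add, map_natCast, map_one]
  ring

theorem X_pow_dvd_pow_succ_sub {R : Type*} [CommRing R] {ζ x : R} {r : ℕ} {a : R⟦X⟧}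
    (ha : X ^ (r + 2) ∣ a - normalForm ζ x 0 r X) (hr : 1 ≤ r) (m : ℕ) :
    X ^ (m + r + 2) ∣
      a ^ (m + 1) - (ζ ^ (m + 1) • X ^ (m + 1) + ((m + 1) * ζ ^ m * x) • X ^ (m + r + 1)) := by
  set v := a - ζ • X with hv
  have hvX : X ^ (r + 2) ∣ v - x • X ^ (r + 1) := by
    simpa [normalForm, hv, sub_sub] using ha
  have hv' : X ^ (r + 1) ∣ v := X_pow_succ_dvd_sub_smul_X ha
  have h₁ := pow_dvd_add_pow_sub_linear (dvd_smul_of_dvd ζ dvd_rfl) hv' m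
  have h₂ : X ^ (m + r + 2) ∣ ((m + 1) * ζ ^ m) • (X ^ m * (v - x • X ^ (r + 1))) := by
    rw [add_assoc, pow_add]
    exact dvd_smul_of_dvd _ (mul_dvd_mul_left _ hvX)
  convert dvd_add ((pow_dvd_pow X (by omega)).trans h₁) h₂ using 1
  have hav : a = ζ • X + v := by simp [hv]
  rw [hav]
  simp only [smul_eq_C_mul, map_mul, map_add, map_natCast, map_pow, map_one]
  ring

variable {k : Type*} [Field k] [CharZero k] {A : k⟦X⟧ →ₐ[k] k⟦X⟧} {ζ x : k} {r : ℕ}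

theorem exists_linearized_solution (hA : X ^ (r + 2) ∣ A X - normalForm ζ x 0 r X)
    (hr : 1 ≤ r) (hζ : ζ ^ r = 1) (hx : x ≠ 0) {d : ℕ} (hdr : d ≠ r) (e : k) :
    ∃ u, X ^ (d + 1) ∣ u ∧ X ^ (d + r + 2) ∣
      A u - (ζ • u + (((r : k) + 1) * x) • (X ^ r * u)) + e • X ^ (d + r + 1) := by
  have hζ₀ : ζ ≠ 0 := (IsUnit.of_pow_eq_one hζ (by omega)).ne_zero
  have solve {a : k} (ha : a ≠ 0) : ∃ c, c * a + e = 0 := ⟨-e / a, by simp [ha]⟩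
  -- If `ζ ^ d = 1`, the terms of degree `d + 1` of a correction `c • X ^ (d + 1)` cancel and the
  -- next ones contribute `c * (d - r) * x`; otherwise `c • X ^ (d + r + 1)` already acts through
  -- its leading term.
  by_cases hd : ζ ^ d = 1
  · obtain ⟨c, hc⟩ := solve (mul_ne_zero (sub_ne_zero.mpr (Nat.cast_injective.ne hdr)) hx)
    refine ⟨c • X ^ (d + 1), dvd_smul_of_dvd _ dvd_rfl, ?_⟩
    convert dvd_smul_of_dvd c (X_pow_dvd_pow_succ_sub hA hr d) using 1
    rw [eq_neg_of_add_eq_zero_right hc, map_smul, map_pow, pow_succ ζ, hd, mul_smul_comm, ← pow_add,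
      show r + (d + 1) = d + r + 1 by ring]
    module
  · have hd' : ζ ^ (d + 1) - ζ ≠ 0 := by
      rw [pow_succ, ← sub_one_mul]
      exact mul_ne_zero (sub_ne_zero.mpr hd) hζ₀
    obtain ⟨c, hc⟩ := solve hd'
    have hA' : X ^ 2 ∣ A X - ζ • X :=
      (pow_dvd_pow X (by omega)).trans (X_pow_succ_dvd_sub_smul_X hA)
    have h₁ := dvd_smul_of_dvd c (X_pow_succ_dvd_map_sub_smul hA' (dvd_refl (X ^ (d + r + 1))))
    have h₂ : (X : k⟦X⟧) ^ (d + r + 2) ∣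
        (c * ((r + 1) * x)) • (X ^ r * X ^ (d + r + 1)) := by
      rw [← pow_add]
      exact dvd_smul_of_dvd _ (pow_dvd_pow X (by omega))
    have hζd : ζ ^ (d + r + 1) = ζ ^ (d + 1) := by rw [add_right_comm, pow_add, hζ, mul_one]
    refine ⟨c • X ^ (d + r + 1), dvd_smul_of_dvd _ (pow_dvd_pow X (by omega)), ?_⟩
    convert dvd_sub h₁ h₂ using 1
    rw [eq_neg_of_add_eq_zero_right hc, hζd, map_smul, mul_smul_comm]
    module

theorem exists_normalForm_improvement (hA : X ^ (r + 2) ∣ A X - normalForm ζ x 0 r X)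
    (hr : 1 ≤ r) (hζ : ζ ^ r = 1) (hx : x ≠ 0) {w : k} {d : ℕ} (hd : 1 ≤ d) (hdr : d ≠ r)
    {g : k⟦X⟧} (hg : X ^ 2 ∣ g - X) (hAg : X ^ (d + r + 1) ∣ A g - normalForm ζ x w r g) :
    ∃ g', X ^ (d + 1) ∣ g' - g ∧ X ^ (d + r + 2) ∣ A g' - normalForm ζ x w r g' := by
  obtain ⟨u, hu, hAu⟩ := exists_linearized_solution hA hr hζ hx hdr
    (coeff (d + r + 1) (A g - normalForm ζ x w r g))
  refine ⟨g + u, by simpa using hu, ?_⟩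
  have h₁ := X_pow_succ_dvd_sub_coeff_smul hAg
  have h₂ := X_pow_dvd_normalForm_add_sub hg hu ζ x w hr hd
  convert dvd_sub (dvd_add h₁ hAu) h₂ using 1
  rw [map_add]
  abel

theorem exists_normalForm_mod_resonance (hA : X ^ (r + 2) ∣ A X - normalForm ζ x 0 r X)
    (hr : 1 ≤ r) (hζ : ζ ^ r = 1) (hx : x ≠ 0) :
    ∃ g w, X ^ 2 ∣ g - X ∧ X ^ (2 * r + 2) ∣ A g - normalForm ζ x w r g := by
  have below_resonance : ∀ d ≥ 1, d ≤ r →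
      ∃ g, X ^ 2 ∣ g - X ∧ X ^ (d + r + 1) ∣ A g - normalForm ζ x 0 r g := by
    intro d hd
    induction d, hd using Nat.le_induction with
    | base => exact fun _ ↦ ⟨X, by simp, by rwa [show 1 + r + 1 = r + 2 by ring]⟩
    | succ d hd ih =>
      intro hdr
      obtain ⟨g, hg, hAg⟩ := ih (by omega)
      obtain ⟨g', hg', hAg'⟩ := exists_normalForm_improvement hA hr hζ hx hd (by omega) hg hAg
      exact ⟨g', dvd_sub_trans ((pow_dvd_pow X (by omega)).trans hg') hg,
        by rwa [add_right_comm d 1 r]⟩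
  obtain ⟨g, hg, hAg⟩ := below_resonance r hr le_rfl
  let w := coeff (2 * r + 1) (A g - normalForm ζ x 0 r g)
  refine ⟨g, w, hg, ?_⟩
  have h₁ : X ^ (2 * r + 2) ∣ A g - normalForm ζ x 0 r g - w • X ^ (2 * r + 1) :=
    X_pow_succ_dvd_sub_coeff_smul (by rwa [two_mul])
  have h₂ : X ^ (2 * r + 2) ∣ w • (g ^ (2 * r + 1) - X ^ (2 * r + 1)) := by
    refine dvd_smul_of_dvd w ?_
    rw [show 2 * r + 2 = 1 + (2 * r + 1) by ring]
    exact pow_add_dvd_pow_sub_pow (X_dvd_of_X_sq_dvd_sub hg) dvd_rfl hg _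
  convert dvd_sub h₁ h₂ using 1
  simp only [normalForm]
  module

theorem exists_map_eq_normalForm (hA : X ^ (r + 2) ∣ A X - normalForm ζ x 0 r X)
    (hr : 1 ≤ r) (hζ : ζ ^ r = 1) (hx : x ≠ 0) :
    ∃ g w, X ^ 2 ∣ g - X ∧ A g = normalForm ζ x w r g := by
  obtain ⟨g₀, w, hg₀, hAg₀⟩ := exists_normalForm_mod_resonance hA hr hζ hx
  let P (m : ℕ) (g : k⟦X⟧) : Prop :=
    X ^ 2 ∣ g - X ∧ X ^ (m + 2 * r + 2) ∣ A g - normalForm ζ x w r g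
  have step (m : ℕ) (g : k⟦X⟧) : P m g → ∃ g', X ^ m ∣ g' - g ∧ P (m + 1) g' := by
    rintro ⟨hg, hAg⟩
    obtain ⟨g', hg', hAg'⟩ := exists_normalForm_improvement hA hr hζ hx (d := m + r + 1)
      (by omega) (by omega) hg (by rwa [show m + r + 1 + r + 1 = m + 2 * r + 2 by ring])
    refine ⟨g', (pow_dvd_pow X (by omega)).trans hg',
      dvd_sub_trans ((pow_dvd_pow X (by omega)).trans hg') hg, ?_⟩
    rwa [show m + 1 + 2 * r + 2 = m + r + 1 + r + 2 by ring]
  have h₀ : P 0 g₀ := ⟨hg₀, by rwa [zero_add]⟩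
  obtain ⟨g, hg⟩ := exists_limit_of_successive_approximation h₀ step
  refine ⟨g, w, ?_, eq_of_forall_pow_dvd_sub (a := X) fun m ↦ ?_⟩
  · obtain ⟨g', hgg', hg', -⟩ := hg 2
    exact dvd_sub_trans hgg' hg'
  · obtain ⟨g', hgg', -, hAg'⟩ := hg m
    have h₁ : X ^ m ∣ A g - A g' := by simpa using X_pow_dvd_map A hgg'
    have h₂ : X ^ m ∣ A g' - normalForm ζ x w r g' := (pow_dvd_pow X (by omega)).trans hAg'
    have h₃ : X ^ m ∣ normalForm ζ x w r g' - normalForm ζ x w r g :=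
      ((dvd_sub_comm.mp hgg').trans (sub_dvd_normalForm_sub ..))
    exact dvd_sub_trans h₁ (dvd_sub_trans h₂ h₃)

end NormalForm

section PowerSeriesConjugacy

theorem exists_algEquiv_apply_X_eq {R : Type*} [CommRing R] {g : R⟦X⟧}
    (hg₀ : constantCoeff g = 0) (hg₁ : IsUnit (coeff 1 g)) : ∃ σ : R⟦X⟧ ≃ₐ[R] R⟦X⟧, σ X = g := by
  have hs : HasSubst g := .of_constantCoeff_zero' hg₀
  have hs' : HasSubst (g.substInvOfIsUnit hg₁) := .substInvOfIsUnit g hg₁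
  refine ⟨AlgEquiv.ofAlgHom (substAlgHom hs) (substAlgHom hs') ?_ ?_, substAlgHom_X hs⟩
  · ext1 f
    simp only [AlgHom.comp_apply, coe_substAlgHom, AlgHom.id_apply]
    rw [subst_comp_subst_apply hs' hs, subst_substInvOfIsUnit_left g hg₀ hg₁, X_subst]
  · ext1 f
    simp only [AlgHom.comp_apply, coe_substAlgHom, AlgHom.id_apply]
    rw [subst_comp_subst_apply hs hs', subst_substInvOfIsUnit_right g hg₀ hg₁, X_subst]

theorem exists_algEquiv_apply_X_eq_of_X_sq_dvd_sub {R : Type*} [CommRing R] {g : R⟦X⟧}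
    (hg : X ^ 2 ∣ g - X) : ∃ σ : R⟦X⟧ ≃ₐ[R] R⟦X⟧, σ X = g := by
  have hcoeff (j : ℕ) (hj : j < 2) : coeff j g = coeff j (X : R⟦X⟧) := by
    simpa [sub_eq_zero] using X_pow_dvd_iff.mp hg j hj
  refine exists_algEquiv_apply_X_eq ?_ ?_
  · simpa using hcoeff 0 two_pos
  · simp [hcoeff 1 one_lt_two]

variable {k : Type*} [Field k] {A : k⟦X⟧ →ₐ[k] k⟦X⟧} {ζ : k} {n : ℕ}

theorem exists_conj_dvd_sub_normalForm (hn : (n : k) ≠ 0) (hζ : ζ ^ n = 1)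
    (hA : X ^ 2 ∣ A X - ζ • X) {r : ℕ} (hr : X ^ (r + 1) ∣ (A ^ n) X - X)
    (hr' : ¬ X ^ (r + 2) ∣ (A ^ n) X - X) :
    ∃ (σ : k⟦X⟧ ≃ₐ[k] k⟦X⟧) (x : k), x ≠ 0 ∧
      X ^ (r + 2) ∣ σ.symm (A (σ X)) - normalForm ζ x 0 r X := by
  have hn₀ : n ≠ 0 := by
    rintro rfl
    simp at hn
  have hζ₀ : ζ ≠ 0 := (IsUnit.of_pow_eq_one hζ hn₀).ne_zero
  set D := (A ^ n) X - X
  have hD : X ^ (r + 2) ∣ D - coeff (r + 1) D • X ^ (r + 1) := X_pow_succ_dvd_sub_coeff_smul hr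
  have hD₀ : coeff (r + 1) D ≠ 0 := fun h ↦ hr' (by simpa [h] using hD)
  obtain ⟨s, hs, hAs⟩ := exists_map_sub_smul_eq hn hζ hA
  obtain ⟨σ, rfl⟩ := exists_algEquiv_apply_X_eq_of_X_sq_dvd_sub hs
  have hσ : X ^ 2 ∣ σ.symm X - X := by
    rw [dvd_sub_comm]
    simpa using X_pow_dvd_map (σ.symm : k⟦X⟧ →ₐ[k] k⟦X⟧) hs
  have hσD : X ^ (r + 2) ∣ σ.symm D - D := by
    rw [show r + 2 = 1 + (r + 1) by ring]
    exact X_pow_add_dvd_map_sub_self (B := (σ.symm : k⟦X⟧ →ₐ[k] k⟦X⟧)) hσ hr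
  refine ⟨σ, ζ / n * coeff (r + 1) D, by simp [hζ₀, hn, hD₀], ?_⟩
  convert dvd_smul_of_dvd (ζ / n) (dvd_sub_trans hσD hD) using 1
  rw [eq_add_of_sub_eq hAs]
  simp only [map_add, map_smul, AlgEquiv.symm_apply_apply, normalForm]
  module

theorem exists_conj_eq_normalForm [CharZero k] (hζ : ζ ^ n = 1) (hA : X ^ 2 ∣ A X - ζ • X) {i : ℕ}
    (hi : X ^ i ∣ (A ^ n) X - X) (hi' : ¬ X ^ (i + 1) ∣ (A ^ n) X - X) :
    ∃ (φ : k⟦X⟧ ≃ₐ[k] k⟦X⟧) (x y : k),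
      A (φ X) = φ (ζ • X + x • X ^ i + (x ^ 2 * y) • X ^ (2 * i - 1)) := by
  have hn : n ≠ 0 := by
    rintro rfl
    simp at hi'
  have hi₂ : 2 ≤ i := by
    by_contra! hi₂
    have := X_sq_dvd_pow_apply_X_sub hA n
    rw [hζ, one_smul] at this
    exact hi' ((pow_dvd_pow X hi₂).trans this)
  obtain ⟨r, rfl⟩ := Nat.exists_eq_add_of_le' (one_le_two.trans hi₂)
  have hζr : ζ ^ r = 1 := by
    have hζ₀ : ζ ≠ 0 := (IsUnit.of_pow_eq_one hζ hn).ne_zero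
    simpa [pow_succ, hζ₀] using
      pow_succ_eq_self_of_commute (Commute.self_pow A n) hA hi hi'
  obtain ⟨σ, x, hx, hσ⟩ := exists_conj_dvd_sub_normalForm (mod_cast hn) hζ hA hi hi'
  let A' : k⟦X⟧ →ₐ[k] k⟦X⟧ := (σ.symm : k⟦X⟧ →ₐ[k] k⟦X⟧).comp (A.comp σ)
  obtain ⟨g, w, hg, hA'g⟩ := exists_map_eq_normalForm (A := A') hσ (by omega) hζr hx
  obtain ⟨τ, rfl⟩ := exists_algEquiv_apply_X_eq_of_X_sq_dvd_sub hg
  refine ⟨τ.trans σ, x, w / x ^ 2, ?_⟩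
  have h : σ.symm (A (σ (τ X))) = τ (normalForm ζ x w r X) :=
    hA'g.trans (map_normalForm (τ : k⟦X⟧ →ₐ[k] k⟦X⟧) ζ x w r X).symm
  rw [mul_div_cancel₀ _ (pow_ne_zero 2 hx)]
  exact σ.symm_apply_eq.mp h

end PowerSeriesConjugacy

section LaurentSeries

variable {k : Type*} [Field k]

theorem exists_pow_eq_of_constantCoeff_eq_one [CharZero k] {u : k⟦X⟧} (hu : constantCoeff u = 1)
    {m : ℕ} (hm : m ≠ 0) : ∃ v : k⟦X⟧, v ^ m = u := by
  have binomialSeries_pow (j : ℕ) (r : ℚ) :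
      binomialSeries k r ^ j = binomialSeries k (j * r) := by
    induction j with
    | zero => simp
    | succ j ih => rw [pow_succ, ih, ← binomialSeries_add, Nat.cast_succ, add_one_mul]
  have hroot : binomialSeries k (1 / m : ℚ) ^ m = 1 + X := by
    rw [binomialSeries_pow, mul_one_div_cancel (mod_cast hm)]
    simpa using binomialSeries_nat (A := k) (R := ℚ) 1
  have hs : HasSubst (u - 1) := .of_constantCoeff_zero' (by simp [hu])
  refine ⟨substAlgHom (R := k) hs (binomialSeries k (1 / m : ℚ)), ?_⟩
  rw [← map_pow, hroot, map_add, map_one, substAlgHom_X, add_sub_cancel]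

theorem order_map_eq_zero_of_constantCoeff_eq_one [CharZero k] {S : Type*} [CommRing S] [IsDomain S]
    (φ : k⟦X⟧ →+* S⸨X⸩) {u : k⟦X⟧} (hu : constantCoeff u = 1) : (φ u).order = 0 := by
  obtain ⟨v, hv⟩ := exists_pow_eq_of_constantCoeff_eq_one hu ((φ u).order.natAbs.succ_ne_zero)
  refine Int.eq_zero_of_abs_lt_dvd (m := (φ u).order.natAbs + 1) ⟨(φ v).order, ?_⟩ (by simp)
  conv_lhs => rw [← hv]
  simp [HahnSeries.order_pow]

theorem exists_coe_eq_of_order_nonneg {R : Type*} [Semiring R] {z : R⸨X⸩} (hz : 0 ≤ z.order) :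
    ∃ h : R⟦X⟧, (h : R⸨X⸩) = z := by
  obtain ⟨m, hm⟩ := Int.eq_ofNat_of_zero_le hz
  exact ⟨_, LaurentSeries.X_order_mul_powerSeriesPart hm.symm⟩

theorem exists_coe_eq_map_coe [CharZero k] (α : k⸨X⸩ →ₐ[k] k⸨X⸩) (h : k⟦X⟧) :
    ∃ h' : k⟦X⟧, (h' : k⸨X⸩) = α h := by
  let c := constantCoeff h - 1
  have hα : α (C c : k⟦X⟧) = (C c : k⟦X⟧) := α.commutes c
  obtain ⟨u, hu⟩ : ∃ u : k⟦X⟧, (u : k⸨X⸩) = α (h - C c : k⟦X⟧) :=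
    exists_coe_eq_of_order_nonneg (order_map_eq_zero_of_constantCoeff_eq_one
      ((α : k⸨X⸩ →+* k⸨X⸩).comp (HahnSeries.ofPowerSeries ℤ k)) (by simp [c])).ge
  refine ⟨u + C c, ?_⟩
  rw [PowerSeries.coe_add, hu, PowerSeries.coe_sub, map_sub, hα, sub_add_cancel]

theorem exists_algHom_coe_eq [CharZero k] (α : k⸨X⸩ →ₐ[k] k⸨X⸩) :
    ∃ A : k⟦X⟧ →ₐ[k] k⟦X⟧, ∀ h : k⟦X⟧, (A h : k⸨X⸩) = α h := by
  choose A hA using exists_coe_eq_map_coe α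
  have inj := HahnSeries.ofPowerSeries_injective (Γ := ℤ) (R := k)
  exact ⟨{
    toFun := A
    map_zero' := inj (by simp [hA])
    map_one' := inj (by simp [hA])
    map_add' f g := inj (by simp [hA])
    map_mul' f g := inj (by simp [hA])
    commutes' c := inj ((hA (C c)).trans (α.commutes c)) }, hA⟩

theorem coe_pow_apply {R : Type*} [CommSemiring R] {α : R⸨X⸩ ≃ₐ[R] R⸨X⸩} {A : R⟦X⟧ →ₐ[R] R⟦X⟧}
    (hA : ∀ h : R⟦X⟧, (A h : R⸨X⸩) = α h) (m : ℕ) (h : R⟦X⟧) : ((A ^ m) h : R⸨X⸩) = (α ^ m) h := by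
  induction m with
  | zero => rfl
  | succ m ih => rw [pow_succ', AlgHom.mul_apply, hA, ih, pow_succ', AlgEquiv.mul_apply]

theorem exists_algEquiv_coe_eq (φ : k⟦X⟧ ≃ₐ[k] k⟦X⟧) :
    ∃ f : k⸨X⸩ ≃ₐ[k] k⸨X⸩, ∀ h : k⟦X⟧, f h = φ h := by
  let F : k⸨X⸩ ≃+* k⸨X⸩ := IsFractionRing.ringEquivOfRingEquiv (φ : k⟦X⟧ ≃+* k⟦X⟧)
  have hF (h : k⟦X⟧) : F h = φ h :=
    IsFractionRing.ringEquivOfRingEquiv_algebraMap (φ : k⟦X⟧ ≃+* k⟦X⟧) h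
  exact ⟨AlgEquiv.ofRingEquiv (f := F) fun c ↦
    (hF (C c)).trans (congrArg _ (φ.commutes c)), hF⟩

end LaurentSeries

theorem conjugate_to_normal_form_general {k : Type*} [Field k] [CharZero k] {n : ℕ} {ζ : k}
    (hζ : ζ ^ n = 1) (α : k⸨X⸩ ≃ₐ[k] k⸨X⸩) {T : k⸨X⸩} (hT : T = HahnSeries.single 1 1)
    (hα : (α T).coeff 1 = ζ) {i : ℕ} (hi_lt : ∀ m : ℤ, m < i → ((α ^ n) T - T).coeff m = 0)
    (hi_ne : ((α ^ n) T - T).coeff i ≠ 0) :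
    ∃ (f β : k⸨X⸩ ≃ₐ[k] k⸨X⸩) (x y : k),
      β T = ζ • T + x • T ^ i + (x ^ 2 * y) • T ^ (2 * i - 1) ∧ ∀ z, α z = f (β (f.symm z)) := by
  obtain ⟨A, hA⟩ := exists_algHom_coe_eq (α : k⸨X⸩ →ₐ[k] k⸨X⸩)
  rw [← PowerSeries.coe_X] at hT
  subst hT
  have hcoeff : coeff 1 (A X) = ζ := by
    rw [← hα, ← LaurentSeries.coeff_coe_powerSeries, hA]
    rfl
  have hcoeff' (m : ℕ) : coeff m ((A ^ n) X - X) = ((α ^ n) (X : k⟦X⟧) - (X : k⟦X⟧)).coeff m := by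
    rw [← LaurentSeries.coeff_coe_powerSeries, PowerSeries.coe_sub, coe_pow_apply hA]
  have hAX : X ^ 2 ∣ A X - ζ • X := by
    rw [← hcoeff]
    simpa using X_pow_succ_dvd_sub_coeff_smul (N := 1) (by simpa using X_dvd_map_X A)
  have hi : X ^ i ∣ (A ^ n) X - X :=
    X_pow_dvd_iff.mpr fun m hm ↦ (hcoeff' m).trans (hi_lt m (mod_cast hm))
  have hi' : ¬ X ^ (i + 1) ∣ (A ^ n) X - X := fun h ↦
    hi_ne ((hcoeff' i).symm.trans (X_pow_dvd_iff.mp h i i.lt_succ_self))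
  obtain ⟨φ, x, y, hφ⟩ := exists_conj_eq_normalForm hζ hAX hi hi'
  obtain ⟨f, hf⟩ := exists_algEquiv_coe_eq φ
  refine ⟨f, (f.trans α).trans f.symm, x, y, ?_, by simp⟩
  have hαf : α (f (X : k⟦X⟧)) =
      f (ζ • X + x • X ^ i + (x ^ 2 * y) • X ^ (2 * i - 1) : k⟦X⟧) := by
    rw [hf, hf, ← hφ, hA]
    rfl
  simpa using f.symm_apply_eq.mpr hαf

/-- Let `k` be a field of characteristic zero and `α` a `k`-automorphism
of `K₁ = k((t₁))` with `α(t₁) = ζt₁ + higher order terms`, `ζ` a primitive `n`-th root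
of unity and `αⁿ ≠ id`. Let `i = i_α = v(αⁿ(t₁) − t₁)`. Then `α` is conjugate in
`Aut_k(K₁)` to an automorphism `β` with `β(t₁) = ζ t₁ + x t₁^i + x²y t₁^(2i−1)`
for some `x, y ∈ k`. -/
theorem conjugate_to_normal_form
    (k : Type*) [Field k] [CharZero k] (n : ℕ) (ζ : k) (hζ : IsPrimitiveRoot ζ n)
    (α : LaurentSeries k ≃ₐ[k] LaurentSeries k)
    (T : LaurentSeries k) (hT : T = HahnSeries.single 1 1)
    (hα0 : ∀ m : ℤ, m ≤ 0 → (α T).coeff m = 0)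
    (hα1 : (α T).coeff 1 = ζ)
    (hn : α ^ n ≠ 1)
    (i : ℕ)
    (hi_lt : ∀ m : ℤ, m < (i : ℤ) → ((α ^ n) T - T).coeff m = 0)
    (hi_ne : ((α ^ n) T - T).coeff (i : ℤ) ≠ 0) :
    ∃ (f β : LaurentSeries k ≃ₐ[k] LaurentSeries k) (x y : k),
      β T = ζ • T + x • T ^ i + (x ^ 2 * y) • T ^ (2 * i - 1) ∧
      ∀ z, α z = f (β (f.symm z)) := by
  exact conjugate_to_normal_form_general hζ.pow_eq_one α hT hα1 hi_lt hi_ne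
end

section
/- In the algebra A = ℚ((u))⟨x,y⟩/⟨[x,[x,y]],[y,[x,y]]⟩, the function w defined by w(a) = k if a = f_k z^k + … + f_m z^m with f_k ≠ 0 (in the canonical form with z = [x,y] central), w(0) = ∞, is a discrete valuation: w(ab) = w(a) + w(b) and w(a+b) ≥ min(w(a), w(b)). In particular A has no nontrivial zero divisors. -/
/-- The two defining relations `[x,[x,y]] = 0` and `[y,[x,y]] = 0` of Dubrovin's
algebra `A = ℚ((u))⟨x,y⟩ / ⟨[x,[x,y]], [y,[x,y]]⟩`. -/
inductive DubrovinRel :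
    FreeAlgebra (LaurentSeries ℚ) (Fin 2) → FreeAlgebra (LaurentSeries ℚ) (Fin 2) → Prop
  | rel1 : DubrovinRel
      (FreeAlgebra.ι (LaurentSeries ℚ) 0 *
          (FreeAlgebra.ι (LaurentSeries ℚ) 0 * FreeAlgebra.ι (LaurentSeries ℚ) 1 -
            FreeAlgebra.ι (LaurentSeries ℚ) 1 * FreeAlgebra.ι (LaurentSeries ℚ) 0) -
        (FreeAlgebra.ι (LaurentSeries ℚ) 0 * FreeAlgebra.ι (LaurentSeries ℚ) 1 -
            FreeAlgebra.ι (LaurentSeries ℚ) 1 * FreeAlgebra.ι (LaurentSeries ℚ) 0) *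
          FreeAlgebra.ι (LaurentSeries ℚ) 0) 0
  | rel2 : DubrovinRel
      (FreeAlgebra.ι (LaurentSeries ℚ) 1 *
          (FreeAlgebra.ι (LaurentSeries ℚ) 0 * FreeAlgebra.ι (LaurentSeries ℚ) 1 -
            FreeAlgebra.ι (LaurentSeries ℚ) 1 * FreeAlgebra.ι (LaurentSeries ℚ) 0) -
        (FreeAlgebra.ι (LaurentSeries ℚ) 0 * FreeAlgebra.ι (LaurentSeries ℚ) 1 -
            FreeAlgebra.ι (LaurentSeries ℚ) 1 * FreeAlgebra.ι (LaurentSeries ℚ) 0) *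
          FreeAlgebra.ι (LaurentSeries ℚ) 1) 0

/-- Dubrovin's algebra `A = ℚ((u))⟨x,y⟩ / ⟨[x,[x,y]], [y,[x,y]]⟩`. -/
abbrev DubrovinAlgebra : Type := RingQuot DubrovinRel

noncomputable instance : Ring DubrovinAlgebra := RingQuot.instRing DubrovinRel
noncomputable instance : Algebra (LaurentSeries ℚ) DubrovinAlgebra :=
  RingQuot.instAlgebra DubrovinRel

noncomputable def DubrovinX : DubrovinAlgebra :=
  RingQuot.mkAlgHom (LaurentSeries ℚ) DubrovinRel (FreeAlgebra.ι (LaurentSeries ℚ) 0)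

noncomputable def DubrovinY : DubrovinAlgebra :=
  RingQuot.mkAlgHom (LaurentSeries ℚ) DubrovinRel (FreeAlgebra.ι (LaurentSeries ℚ) 1)

/-- `z = [x,y]` in Dubrovin's algebra. -/
noncomputable def DubrovinZ : DubrovinAlgebra :=
  DubrovinX * DubrovinY - DubrovinY * DubrovinX

/-- The normal-form polynomials in `x, y`: the `ℚ((u))`-span of the monomials `x^a y^b`. -/
noncomputable def DubrovinPoly : Submodule (LaurentSeries ℚ) DubrovinAlgebra :=
  Submodule.span (LaurentSeries ℚ)
    {m : DubrovinAlgebra | ∃ a b : ℕ, m = DubrovinX ^ a * DubrovinY ^ b}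

/-! `w a` is the multiplicity of `z = [x,y]` in `a`. Since `z` is central, reordering the factors of
a product costs only multiples of `z`, so modulo `z` normal forms multiply like commutative
polynomials, and `z` is prime in `A` because `Z` is prime in `R[X,Y,Z]`, where `R` is the ring of
coefficients. Multiplicity with respect to a central regular prime element is additive. Normal forms
are unique because `A` acts on `R[X,Y,Z]` with `x` acting as `X` and `y` as `Y - Z ∂/∂X`, and a
normal form applied to `1` returns the commutative polynomial with the same coefficients. -/

section CentralElement

theorem dvd_mul_of_commute_of_dvd {M : Type*} [Monoid M] {z a b : M} (hza : Commute z a)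
    (hb : z ∣ b) : z ∣ a * b := by
  obtain ⟨c, rfl⟩ := hb
  exact ⟨a * c, by rw [← mul_assoc, ← hza.eq, mul_assoc]⟩

theorem emultiplicity_pow_mul_of_not_dvd {M : Type*} [Monoid M] {z b : M} (hz : IsLeftRegular z)
    (hb : ¬ z ∣ b) (n : ℕ) : emultiplicity z (z ^ n * b) = n := by
  refine emultiplicity_eq_of_dvd_of_not_dvd (dvd_mul_right _ _) fun ⟨c, hc⟩ => hb ⟨c, ?_⟩
  rw [pow_succ, mul_assoc] at hc
  exact hz.pow n hc

theorem emultiplicity_mul_of_central {M : Type*} [Monoid M] {z : M} (hcomm : ∀ a, Commute z a)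
    (hreg : IsLeftRegular z) (hprime : ∀ a b, z ∣ a * b → z ∣ a ∨ z ∣ b) (a b : M) :
    emultiplicity z (a * b) = emultiplicity z a + emultiplicity z b := by
  by_cases ha : FiniteMultiplicity z a
  · by_cases hb : FiniteMultiplicity z b
    · obtain ⟨a', ha', hza'⟩ := ha.exists_eq_pow_mul_and_not_dvd
      obtain ⟨b', hb', hzb'⟩ := hb.exists_eq_pow_mul_and_not_dvd
      set m := multiplicity z a
      set n := multiplicity z b
      have hab : a * b = z ^ (m + n) * (a' * b') := by
        rw [ha', hb', pow_add, mul_assoc, mul_assoc, ((hcomm a').pow_left n).symm.left_comm]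
      have hzab' : ¬ z ∣ a' * b' := fun h => (hprime a' b' h).elim hza' hzb'
      rw [hab, ha', hb', emultiplicity_pow_mul_of_not_dvd hreg hzab',
        emultiplicity_pow_mul_of_not_dvd hreg hza', emultiplicity_pow_mul_of_not_dvd hreg hzb',
        Nat.cast_add]
    · have hab : ¬ FiniteMultiplicity z (a * b) := by
        rw [FiniteMultiplicity.not_iff_forall] at hb ⊢
        exact fun n => dvd_mul_of_commute_of_dvd ((hcomm a).pow_left n) (hb n)
      rw [emultiplicity_eq_top.mpr hab, emultiplicity_eq_top.mpr hb, add_top]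
  · have hab : ¬ FiniteMultiplicity z (a * b) := mt FiniteMultiplicity.mul_left ha
    rw [emultiplicity_eq_top.mpr hab, emultiplicity_eq_top.mpr ha, top_add]

theorem emultiplicity_finsuppSum_mul_pow {A : Type*} [Ring A] {z : A} (hcomm : ∀ a, Commute z a)
    (hreg : IsLeftRegular z) (g : ℕ →₀ A) {k : ℕ} (hk : ¬ z ∣ g k) (hlt : ∀ j < k, g j = 0) :
    emultiplicity z (g.sum fun j c => c * z ^ j) = k := by
  have hk_mem : k ∈ g.support := Finsupp.mem_support_iff.mpr fun h => hk (h ▸ dvd_zero z)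
  have htail : z ^ (k + 1) ∣ ∑ j ∈ g.support.erase k, g j * z ^ j := by
    refine Finset.dvd_sum fun j hj => ?_
    obtain ⟨hjk, hj⟩ := Finset.mem_erase.mp hj
    have hkj : k < j :=
      lt_of_le_of_ne (not_lt.mp fun h => Finsupp.mem_support_iff.mp hj (hlt j h)) hjk.symm
    exact dvd_mul_of_commute_of_dvd ((hcomm _).pow_left _) (pow_dvd_pow z hkj)
  obtain ⟨b, hb⟩ := htail
  have hsum : (g.sum fun j c => c * z ^ j) = z ^ k * (g k + z * b) := by
    rw [Finsupp.sum, ← Finset.add_sum_erase _ _ hk_mem, hb, ← ((hcomm (g k)).pow_left k).eq,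
      pow_succ, mul_add, mul_assoc]
  rw [hsum]
  exact emultiplicity_pow_mul_of_not_dvd hreg
    (fun h => hk ((dvd_add_left (dvd_mul_right z b)).mp h)) k

end CentralElement

open MvPolynomial

theorem le_degreeOf_of_X_pow_dvd {R σ : Type*} [CommSemiring R] {p : MvPolynomial σ R} {i : σ}
    {n : ℕ} (hp : p ≠ 0) (h : X i ^ n ∣ p) : n ≤ p.degreeOf i := by
  obtain ⟨q, rfl⟩ := h
  rw [mul_comm, degreeOf_mul_X_self_pow_eq_add_of_ne_zero i n (right_ne_zero_of_mul hp)]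
  exact Nat.le_add_left _ _

section Heisenberg

variable {R A : Type*} [CommRing R] [Ring A] [Algebra R A] {x y : A}

/-- `x` and `y` generate the `R`-algebra `A` and satisfy the relations
`[x,[x,y]] = [y,[x,y]] = 0` of the Heisenberg Lie algebra. -/
structure IsHeisenbergPair (R : Type*) {A : Type*} [CommRing R] [Ring A] [Algebra R A]
    (x y : A) : Prop where
  commute_left : Commute x ⁅x, y⁆
  commute_right : Commute y ⁅x, y⁆
  adjoin_eq_top : Algebra.adjoin R {x, y} = ⊤

/-- Normal ordering: the `R`-linear map `R[X,Y,Z] → A` sending `X^a Y^b Z^c` to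
`x^a y^b [x,y]^c`; the variables `X`, `Y`, `Z` are those of index `0`, `1`, `2`. -/
noncomputable def normalOrder (R : Type*) {A : Type*} [CommRing R] [Ring A] [Algebra R A]
    (x y : A) : MvPolynomial (Fin 3) R →ₗ[R] A :=
  (basisMonomials (Fin 3) R).constr R fun m => x ^ m 0 * y ^ m 1 * ⁅x, y⁆ ^ m 2

theorem normalOrder_monomial (m : Fin 3 →₀ ℕ) (r : R) :
    normalOrder R x y (monomial m r) = r • (x ^ m 0 * y ^ m 1 * ⁅x, y⁆ ^ m 2) := by
  have h : monomial m r = r • basisMonomials (Fin 3) R m := by simp [smul_monomial]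
  rw [h, map_smul, normalOrder, Module.Basis.constr_basis]

theorem normalOrder_C (r : R) : normalOrder R x y (C r) = algebraMap R A r := by
  rw [C_apply, normalOrder_monomial]
  simp [Algebra.algebraMap_eq_smul_one]

theorem normalOrder_X_pow_mul_X_pow (a b : ℕ) :
    normalOrder R x y (X 0 ^ a * X 1 ^ b) = x ^ a * y ^ b := by
  rw [X_pow_eq_monomial, X_pow_eq_monomial, monomial_mul, normalOrder_monomial]
  simp

theorem normalOrder_mul_X_zero (p : MvPolynomial (Fin 3) R) :
    normalOrder R x y (p * X 0) = x * normalOrder R x y p := by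
  induction p using MvPolynomial.induction_on' with
  | monomial m r =>
    rw [X, monomial_mul, normalOrder_monomial, normalOrder_monomial, mul_smul_comm]
    simp [pow_succ', mul_assoc]
  | add p q hp hq => rw [add_mul, map_add, map_add, hp, hq, mul_add]

theorem normalOrder_mul_X_two (p : MvPolynomial (Fin 3) R) :
    normalOrder R x y (p * X 2) = normalOrder R x y p * ⁅x, y⁆ := by
  induction p using MvPolynomial.induction_on' with
  | monomial m r =>
    rw [X, monomial_mul, normalOrder_monomial, normalOrder_monomial, smul_mul_assoc]
    simp [pow_succ, mul_assoc]
  | add p q hp hq => rw [add_mul, map_add, map_add, hp, hq, add_mul]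

theorem normalOrder_mul_X_two_pow (p : MvPolynomial (Fin 3) R) (n : ℕ) :
    normalOrder R x y (p * X 2 ^ n) = normalOrder R x y p * ⁅x, y⁆ ^ n := by
  induction n with
  | zero => rw [pow_zero, pow_zero, mul_one, mul_one]
  | succ n ih => rw [pow_succ, ← mul_assoc, normalOrder_mul_X_two, ih, pow_succ, mul_assoc]

theorem exists_normalOrder_eq_of_mem_span {f : A}
    (hf : f ∈ Submodule.span R {m : A | ∃ a b : ℕ, m = x ^ a * y ^ b}) :
    ∃ p : MvPolynomial (Fin 3) R, p.degreeOf 2 = 0 ∧ normalOrder R x y p = f := by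
  induction hf using Submodule.span_induction with
  | mem f hf =>
    obtain ⟨a, b, rfl⟩ := hf
    refine ⟨X 0 ^ a * X 1 ^ b, ?_, normalOrder_X_pow_mul_X_pow a b⟩
    rw [degreeOf_mul_X_pow_of_ne b (by decide), degreeOf_X_pow_of_ne a (by decide)]
  | zero => exact ⟨0, degreeOf_zero 2, map_zero _⟩
  | add f g _ _ hf hg =>
    obtain ⟨p, hp, rfl⟩ := hf
    obtain ⟨q, hq, rfl⟩ := hg
    exact ⟨p + q, Nat.le_zero.mp ((degreeOf_add_le 2 p q).trans_eq (by rw [hp, hq, max_self])),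
      map_add _ p q⟩
  | smul r f _ hf =>
    obtain ⟨p, hp, rfl⟩ := hf
    refine ⟨r • p, Nat.le_zero.mp ?_, map_smul _ r p⟩
    rw [smul_eq_C_mul]
    exact (degreeOf_C_mul_le p 2 r).trans_eq hp

namespace IsHeisenbergPair

@[elab_as_elim]
theorem induction {motive : A → Prop} (h : IsHeisenbergPair R x y)
    (algebraMap : ∀ r : R, motive (algebraMap R A r)) (left : motive x) (right : motive y)
    (add : ∀ a b, motive a → motive b → motive (a + b))
    (mul : ∀ a b, motive a → motive b → motive (a * b)) (a : A) : motive a := by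
  have ha : a ∈ Algebra.adjoin R {x, y} := h.adjoin_eq_top ▸ Algebra.mem_top
  induction ha using Algebra.adjoin_induction with
  | mem a ha => rcases ha with rfl | rfl <;> assumption
  | algebraMap r => exact algebraMap r
  | add a b _ _ ha hb => exact add a b ha hb
  | mul a b _ _ ha hb => exact mul a b ha hb

theorem commute_lie (h : IsHeisenbergPair R x y) (a : A) : Commute ⁅x, y⁆ a := by
  induction a using h.induction with
  | algebraMap r => exact (Algebra.commutes r _).symm
  | left => exact h.commute_left.symm
  | right => exact h.commute_right.symm
  | add a b ha hb => exact ha.add_right hb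
  | mul a b ha hb => exact ha.mul_right hb

theorem lie_dvd_lie_left (h : IsHeisenbergPair R x y) (a : A) : ⁅x, y⁆ ∣ ⁅x, a⁆ := by
  induction a using h.induction with
  | algebraMap r => rw [commute_iff_lie_eq.mp (Algebra.commutes r x).symm]; exact dvd_zero _
  | left => rw [commute_iff_lie_eq.mp (Commute.refl x)]; exact dvd_zero _
  | right => exact dvd_rfl
  | add a b ha hb =>
    have hab : ⁅x, a + b⁆ = ⁅x, a⁆ + ⁅x, b⁆ := by simp only [Ring.lie_def]; noncomm_ring
    exact hab ▸ dvd_add ha hb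
  | mul a b ha hb =>
    have hab : ⁅x, a * b⁆ = ⁅x, a⁆ * b + a * ⁅x, b⁆ := by simp only [Ring.lie_def]; noncomm_ring
    exact hab ▸ dvd_add (ha.mul_right b) (dvd_mul_of_commute_of_dvd (h.commute_lie a) hb)

theorem normalOrder_mul_X_one (h : IsHeisenbergPair R x y) (p : MvPolynomial (Fin 3) R) :
    normalOrder R x y (p * X 1) = normalOrder R x y p * y := by
  induction p using MvPolynomial.induction_on' with
  | monomial m r =>
    have hyz : ⁅x, y⁆ ^ m 2 * y = y * ⁅x, y⁆ ^ m 2 := ((h.commute_lie y).pow_left _).eq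
    rw [X, monomial_mul, normalOrder_monomial, normalOrder_monomial, smul_mul_assoc]
    simp [pow_succ, mul_assoc, hyz]
  | add p q hp hq => rw [add_mul, map_add, map_add, hp, hq, add_mul]

theorem exists_normalOrder_eq_y_mul (h : IsHeisenbergPair R x y)
    (p : MvPolynomial (Fin 3) R) : ∃ q, normalOrder R x y q = y * normalOrder R x y p := by
  induction p using MvPolynomial.induction_on with
  | C r =>
    refine ⟨C r * X 1, ?_⟩
    rw [h.normalOrder_mul_X_one, normalOrder_C, Algebra.commutes]
  | add p₁ p₂ h₁ h₂ =>
    obtain ⟨q₁, hq₁⟩ := h₁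
    obtain ⟨q₂, hq₂⟩ := h₂
    exact ⟨q₁ + q₂, by rw [map_add, map_add, hq₁, hq₂, mul_add]⟩
  | mul_X p i hp =>
    obtain ⟨q, hq⟩ := hp
    match i with
    | 0 =>
      refine ⟨q * X 0 - p * X 2, ?_⟩
      have hyx : y * x = x * y - ⁅x, y⁆ := by rw [Ring.lie_def, sub_sub_cancel]
      rw [map_sub, normalOrder_mul_X_zero, normalOrder_mul_X_two, hq, ← (h.commute_lie _).eq,
        normalOrder_mul_X_zero, ← mul_assoc y, hyx, sub_mul, mul_assoc]
    | 1 =>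
      refine ⟨q * X 1, ?_⟩
      rw [h.normalOrder_mul_X_one, hq, h.normalOrder_mul_X_one, mul_assoc]
    | 2 =>
      refine ⟨q * X 2, ?_⟩
      rw [normalOrder_mul_X_two, hq, normalOrder_mul_X_two, mul_assoc]

theorem normalOrder_surjective (h : IsHeisenbergPair R x y) :
    Function.Surjective (normalOrder R x y) := by
  suffices ∀ a p, ∃ q, normalOrder R x y q = a * normalOrder R x y p by
    intro a
    obtain ⟨q, hq⟩ := this a (C 1)
    exact ⟨q, by rw [hq, normalOrder_C, map_one, mul_one]⟩
  intro a
  induction a using h.induction with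
  | algebraMap r => exact fun p => ⟨r • p, by rw [map_smul, Algebra.smul_def]⟩
  | left => exact fun p => ⟨p * X 0, normalOrder_mul_X_zero p⟩
  | right => exact h.exists_normalOrder_eq_y_mul
  | add a b ha hb =>
    intro p
    obtain ⟨q₁, hq₁⟩ := ha p
    obtain ⟨q₂, hq₂⟩ := hb p
    exact ⟨q₁ + q₂, by rw [map_add, hq₁, hq₂, add_mul]⟩
  | mul a b ha hb =>
    intro p
    obtain ⟨q₁, hq₁⟩ := hb p
    obtain ⟨q₂, hq₂⟩ := ha q₁
    exact ⟨q₂, by rw [hq₂, hq₁, mul_assoc]⟩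

theorem lie_dvd_normalOrder_mul_sub (h : IsHeisenbergPair R x y) (p q : MvPolynomial (Fin 3) R) :
    ⁅x, y⁆ ∣ normalOrder R x y p * normalOrder R x y q - normalOrder R x y (p * q) := by
  induction q using MvPolynomial.induction_on with
  | C r =>
    rw [mul_comm p, ← smul_eq_C_mul, map_smul, normalOrder_C, ← Algebra.commutes,
      ← Algebra.smul_def, sub_self]
    exact dvd_zero _
  | add q₁ q₂ h₁ h₂ =>
    rw [mul_add, map_add, map_add, mul_add, add_sub_add_comm]
    exact dvd_add h₁ h₂
  | mul_X q i hq =>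
    rw [← mul_assoc]
    match i with
    | 0 =>
      set a := normalOrder R x y p
      set b := normalOrder R x y q
      have hswap : a * (x * b) - x * normalOrder R x y (p * q) =
          x * (a * b - normalOrder R x y (p * q)) - ⁅x, a⁆ * b := by
        rw [Ring.lie_def]; noncomm_ring
      rw [normalOrder_mul_X_zero, normalOrder_mul_X_zero, hswap]
      exact dvd_sub (dvd_mul_of_commute_of_dvd (h.commute_lie x) hq)
        ((h.lie_dvd_lie_left a).mul_right b)
    | 1 =>
      rw [h.normalOrder_mul_X_one, h.normalOrder_mul_X_one, ← mul_assoc, ← sub_mul]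
      exact hq.mul_right y
    | 2 =>
      rw [normalOrder_mul_X_two, normalOrder_mul_X_two, ← mul_assoc, ← sub_mul]
      exact hq.mul_right _

theorem lie_pow_dvd_normalOrder_iff (h : IsHeisenbergPair R x y)
    (hinj : Function.Injective (normalOrder R x y)) {p : MvPolynomial (Fin 3) R} {n : ℕ} :
    ⁅x, y⁆ ^ n ∣ normalOrder R x y p ↔ X 2 ^ n ∣ p := by
  constructor
  · rintro ⟨b, hb⟩
    obtain ⟨q, rfl⟩ := h.normalOrder_surjective b
    rw [((h.commute_lie _).pow_left n).eq, ← normalOrder_mul_X_two_pow] at hb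
    exact hinj hb ▸ dvd_mul_left _ _
  · rintro ⟨q, rfl⟩
    rw [mul_comm, normalOrder_mul_X_two_pow, ← ((h.commute_lie _).pow_left n).eq]
    exact dvd_mul_right _ _

theorem lie_dvd_normalOrder_iff (h : IsHeisenbergPair R x y)
    (hinj : Function.Injective (normalOrder R x y)) {p : MvPolynomial (Fin 3) R} :
    ⁅x, y⁆ ∣ normalOrder R x y p ↔ X 2 ∣ p := by
  simpa only [pow_one] using h.lie_pow_dvd_normalOrder_iff hinj (n := 1)

theorem isLeftRegular_lie (h : IsHeisenbergPair R x y)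
    (hinj : Function.Injective (normalOrder R x y)) : IsLeftRegular ⁅x, y⁆ := by
  intro a b hab
  obtain ⟨p, rfl⟩ := h.normalOrder_surjective a
  obtain ⟨q, rfl⟩ := h.normalOrder_surjective b
  simp only [(h.commute_lie _).eq, ← normalOrder_mul_X_two] at hab
  rw [isRegular_X.right (hinj hab)]

theorem lie_dvd_or_dvd [IsDomain R] (h : IsHeisenbergPair R x y)
    (hinj : Function.Injective (normalOrder R x y)) (a b : A) (hab : ⁅x, y⁆ ∣ a * b) :
    ⁅x, y⁆ ∣ a ∨ ⁅x, y⁆ ∣ b := by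
  obtain ⟨p, rfl⟩ := h.normalOrder_surjective a
  obtain ⟨q, rfl⟩ := h.normalOrder_surjective b
  have hpq : ⁅x, y⁆ ∣ normalOrder R x y (p * q) :=
    (dvd_sub_right hab).mp (h.lie_dvd_normalOrder_mul_sub p q)
  simp only [h.lie_dvd_normalOrder_iff hinj] at hpq ⊢
  exact X_prime.dvd_or_dvd hpq

theorem emultiplicity_lie_eq_top_iff (h : IsHeisenbergPair R x y)
    (hinj : Function.Injective (normalOrder R x y)) {a : A} :
    emultiplicity ⁅x, y⁆ a = ⊤ ↔ a = 0 := by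
  refine ⟨fun ha => ?_, fun ha => ha ▸ emultiplicity_zero _⟩
  obtain ⟨p, rfl⟩ := h.normalOrder_surjective a
  rw [emultiplicity_eq_top, FiniteMultiplicity.not_iff_forall] at ha
  have hdvd := (h.lie_pow_dvd_normalOrder_iff hinj).mp (ha (p.degreeOf 2 + 1))
  rcases eq_or_ne p 0 with rfl | hp
  · exact map_zero _
  · exact absurd (le_degreeOf_of_X_pow_dvd hp hdvd) (Nat.lt_succ_self _).not_ge

theorem not_lie_dvd_of_mem_span (h : IsHeisenbergPair R x y)
    (hinj : Function.Injective (normalOrder R x y)) {f : A}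
    (hf : f ∈ Submodule.span R {m : A | ∃ a b : ℕ, m = x ^ a * y ^ b}) (hf0 : f ≠ 0) :
    ¬ ⁅x, y⁆ ∣ f := by
  obtain ⟨p, hp, rfl⟩ := exists_normalOrder_eq_of_mem_span hf
  have hp0 : p ≠ 0 := by
    rintro rfl
    exact hf0 (map_zero _)
  rw [h.lie_dvd_normalOrder_iff hinj, ← pow_one (X 2)]
  intro hdvd
  exact (le_degreeOf_of_X_pow_dvd hp0 hdvd).not_gt (by rw [hp]; exact one_pos)

end IsHeisenbergPair

theorem dubrovin_valuation_exists_general [IsDomain R] (h : IsHeisenbergPair R x y)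
    (hinj : Function.Injective (normalOrder R x y)) :
    ∃ w : A → WithTop ℕ,
      w 0 = ⊤ ∧
      (∀ (a : A) (g : ℕ →₀ A),
        (∀ j, g j ∈ Submodule.span R {m : A | ∃ a b : ℕ, m = x ^ a * y ^ b}) →
        a = g.sum (fun j c => c * ⁅x, y⁆ ^ j) →
        ∀ k : ℕ, g k ≠ 0 → (∀ j < k, g j = 0) → w a = (k : WithTop ℕ)) ∧
      (∀ a b : A, w (a * b) = w a + w b) ∧
      (∀ a b : A, min (w a) (w b) ≤ w (a + b)) ∧
      (∀ a b : A, a * b = 0 → a = 0 ∨ b = 0) := by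
  have hreg := h.isLeftRegular_lie hinj
  have hmul := emultiplicity_mul_of_central h.commute_lie hreg (h.lie_dvd_or_dvd hinj)
  refine ⟨emultiplicity ⁅x, y⁆, emultiplicity_zero _, ?_, hmul,
    fun _ _ => min_le_emultiplicity_add, fun a b hab => ?_⟩
  · rintro _ g hg rfl k hk hlt
    exact emultiplicity_finsuppSum_mul_pow h.commute_lie hreg g
      (h.not_lie_dvd_of_mem_span hinj (hg k) hk) hlt
  · rw [← h.emultiplicity_lie_eq_top_iff hinj, hmul, ENat.add_eq_top] at hab
    simpa only [h.emultiplicity_lie_eq_top_iff hinj] using hab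

end Heisenberg

section Representation

variable (R : Type*) [CommRing R]

/-- The operator `X` on `R[X,Y,Z]`, through which `x` acts on normal forms. -/
noncomputable def heisenbergOpX : Module.End R (MvPolynomial (Fin 3) R) :=
  LinearMap.mulLeft R (X 0)

/-- The operator `Y - Z ∂/∂X` on `R[X,Y,Z]`, through which `y` acts on normal forms. -/
noncomputable def heisenbergOpY : Module.End R (MvPolynomial (Fin 3) R) :=
  LinearMap.mulLeft R (X 1) - LinearMap.mulLeft R (X 2) ∘ₗ (pderiv 0).toLinearMap

variable {R}

theorem heisenbergOpX_apply (p : MvPolynomial (Fin 3) R) : heisenbergOpX R p = X 0 * p := rfl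

theorem heisenbergOpY_apply (p : MvPolynomial (Fin 3) R) :
    heisenbergOpY R p = X 1 * p - X 2 * pderiv 0 p := rfl

theorem lie_heisenbergOpX_heisenbergOpY :
    ⁅heisenbergOpX R, heisenbergOpY R⁆ = LinearMap.mulLeft R (X 2) := by
  refine LinearMap.ext fun p => ?_
  simp only [Ring.lie_def, LinearMap.sub_apply, Module.End.mul_apply, heisenbergOpX_apply,
    heisenbergOpY_apply, Derivation.leibniz, pderiv_X_self, smul_eq_mul, LinearMap.mulLeft_apply]
  ring

theorem commute_heisenbergOpX_lie :
    Commute (heisenbergOpX R) ⁅heisenbergOpX R, heisenbergOpY R⁆ := by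
  rw [lie_heisenbergOpX_heisenbergOpY]
  exact LinearMap.ext fun p => mul_left_comm _ _ _

theorem commute_heisenbergOpY_lie :
    Commute (heisenbergOpY R) ⁅heisenbergOpX R, heisenbergOpY R⁆ := by
  rw [lie_heisenbergOpX_heisenbergOpY]
  refine LinearMap.ext fun p => ?_
  simp only [Module.End.mul_apply, heisenbergOpY_apply, LinearMap.mulLeft_apply,
    Derivation.leibniz, pderiv_X_of_ne (show (2 : Fin 3) ≠ 0 by decide), smul_eq_mul]
  ring

variable {A : Type*} [Ring A] [Algebra R A] {x y : A}

theorem IsHeisenbergPair.algHom_normalOrder_apply (h : IsHeisenbergPair R x y)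
    {φ : A →ₐ[R] Module.End R (MvPolynomial (Fin 3) R)} (hx : φ x = heisenbergOpX R)
    (hy : φ y = heisenbergOpY R) (p : MvPolynomial (Fin 3) R) {q : MvPolynomial (Fin 3) R}
    (hq : pderiv 0 q = 0) : φ (normalOrder R x y p) q = p * q := by
  have hz : φ ⁅x, y⁆ = LinearMap.mulLeft R (X 2) := by
    rw [Ring.lie_def, map_sub, map_mul, map_mul, hx, hy, ← Ring.lie_def,
      lie_heisenbergOpX_heisenbergOpY]
  induction p using MvPolynomial.induction_on generalizing q with
  | C r => rw [normalOrder_C, AlgHom.commutes, Module.algebraMap_end_apply, smul_eq_C_mul]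
  | add p₁ p₂ h₁ h₂ => rw [map_add, map_add, LinearMap.add_apply, h₁ hq, h₂ hq, add_mul]
  | mul_X p i hp =>
    have hXq : ∀ j : Fin 3, j ≠ 0 → pderiv 0 (X j * q) = 0 := fun j hj => by
      rw [Derivation.leibniz, pderiv_X_of_ne hj, hq, smul_zero, smul_zero, add_zero]
    match i with
    | 0 =>
      rw [normalOrder_mul_X_zero, map_mul, Module.End.mul_apply, hx, hp hq, heisenbergOpX_apply,
        mul_left_comm, mul_assoc]
    | 1 =>
      rw [h.normalOrder_mul_X_one, map_mul, Module.End.mul_apply, hy, heisenbergOpY_apply, hq,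
        mul_zero, sub_zero, hp (hXq 1 (by decide)), mul_assoc]
    | 2 =>
      rw [normalOrder_mul_X_two, map_mul, Module.End.mul_apply, hz, LinearMap.mulLeft_apply,
        hp (hXq 2 (by decide)), mul_assoc]

theorem IsHeisenbergPair.normalOrder_injective (h : IsHeisenbergPair R x y)
    (φ : A →ₐ[R] Module.End R (MvPolynomial (Fin 3) R)) (hx : φ x = heisenbergOpX R)
    (hy : φ y = heisenbergOpY R) : Function.Injective (normalOrder R x y) := by
  refine Function.LeftInverse.injective (g := fun a => φ a 1) fun p => ?_
  simpa only [mul_one] using h.algHom_normalOrder_apply hx hy p pderiv_one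

end Representation

theorem isHeisenbergPair_dubrovin :
    IsHeisenbergPair (LaurentSeries ℚ) DubrovinX DubrovinY where
  commute_left := by
    have h := RingQuot.mkAlgHom_rel (LaurentSeries ℚ) DubrovinRel.rel1
    simp only [map_sub, map_mul, map_zero] at h
    exact sub_eq_zero.mp h
  commute_right := by
    have h := RingQuot.mkAlgHom_rel (LaurentSeries ℚ) DubrovinRel.rel2
    simp only [map_sub, map_mul, map_zero] at h
    exact sub_eq_zero.mp h
  adjoin_eq_top := by
    have hgen : RingQuot.mkAlgHom (LaurentSeries ℚ) DubrovinRel ''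
        Set.range (FreeAlgebra.ι (LaurentSeries ℚ)) = {DubrovinX, DubrovinY} := by
      rw [← Set.range_comp]
      ext a
      simp [Fin.exists_fin_two, DubrovinX, DubrovinY, eq_comm]
    rw [← hgen, ← AlgHom.map_adjoin, FreeAlgebra.adjoin_range_ι, Algebra.map_top]
    exact (AlgHom.range_eq_top _).mpr (RingQuot.mkAlgHom_surjective _ _)

theorem exists_algHom_dubrovin {B : Type*} [Ring B] [Algebra (LaurentSeries ℚ) B] {b c : B}
    (hb : Commute b ⁅b, c⁆) (hc : Commute c ⁅b, c⁆) :
    ∃ φ : DubrovinAlgebra →ₐ[LaurentSeries ℚ] B, φ DubrovinX = b ∧ φ DubrovinY = c := by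
  let φ : FreeAlgebra (LaurentSeries ℚ) (Fin 2) →ₐ[LaurentSeries ℚ] B :=
    FreeAlgebra.lift (LaurentSeries ℚ) ![b, c]
  have hφ : ∀ ⦃f g⦄, DubrovinRel f g → φ f = φ g := by
    rintro _ _ (_ | _) <;>
      simp only [φ, map_sub, map_mul, map_zero, FreeAlgebra.lift_ι_apply, Matrix.cons_val_zero,
        Matrix.cons_val_one]
    exacts [sub_eq_zero.mpr hb, sub_eq_zero.mpr hc]
  refine ⟨RingQuot.liftAlgHom (LaurentSeries ℚ) ⟨φ, hφ⟩, ?_, ?_⟩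
  · simp [DubrovinX, φ]
  · simp [DubrovinY, φ]

/-- On `A = ℚ((u))⟨x,y⟩/⟨[x,[x,y]],[y,[x,y]]⟩` the function `w`
given on the canonical form `a = f_k z^k + … + f_m z^m` (`f_k ≠ 0`) by `w(a) = k`,
`w(0) = ∞`, is a discrete valuation: `w(ab) = w(a) + w(b)` and
`w(a+b) ≥ min(w(a), w(b))`. In particular `A` has no nontrivial zero divisors. -/
theorem dubrovin_valuation_exists :
    ∃ w : DubrovinAlgebra → WithTop ℕ,
      w 0 = ⊤ ∧
      (∀ (a : DubrovinAlgebra) (g : ℕ →₀ DubrovinAlgebra),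
        (∀ j, g j ∈ DubrovinPoly) →
        a = g.sum (fun j c => c * DubrovinZ ^ j) →
        ∀ k : ℕ, g k ≠ 0 → (∀ j < k, g j = 0) → w a = (k : WithTop ℕ)) ∧
      (∀ a b : DubrovinAlgebra, w (a * b) = w a + w b) ∧
      (∀ a b : DubrovinAlgebra, min (w a) (w b) ≤ w (a + b)) ∧
      (∀ a b : DubrovinAlgebra, a * b = 0 → a = 0 ∨ b = 0) := by
  obtain ⟨φ, hX, hY⟩ := exists_algHom_dubrovin (commute_heisenbergOpX_lie (R := LaurentSeries ℚ))
    commute_heisenbergOpY_lie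
  exact dubrovin_valuation_exists_general isHeisenbergPair_dubrovin
    (isHeisenbergPair_dubrovin.normalOrder_injective φ hX hY)
end
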